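/- For fixed μ > 0, the function ε ↦ δ_μ(ε) = Φ(−ε/μ + μ/2) − e^ε·Φ(−ε/μ − μ/2) is differentiable on ℝ with derivative δ_μ'(ε) = −e^ε·Φ(−ε/μ − μ/2); in particular δ_μ is strictly decreasing on ℝ. -/

import Mathlib

open MeasureTheory ProbabilityTheory Real

/-- The standard normal CDF `Φ`. -/
noncomputable def Phi : ℝ → ℝ := fun x => cdf (gaussianReal 0 1) x

/-- `δ_μ(ε) = Φ(−ε/μ + μ/2) − e^ε·Φ(−ε/μ − μ/2)`. -/
noncomputable def deltaGDP (μ ε : ℝ) : ℝ :=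
  Phi (-ε / μ + μ / 2) - Real.exp ε * Phi (-ε / μ - μ / 2)

/-!
Let `φ` be the standard normal density and put `a = -ε/μ + μ/2`, `b = -ε/μ - μ/2`.
Since `(b² - a²) / 2 = ε`, the likelihood ratio `φ(a) / φ(b)` equals `e^ε`. Hence the two density
terms `-φ(a) / μ` and `e^ε φ(b) / μ` in the derivative of `Φ(a) - e^ε Φ(b)` cancel, leaving only
the term `-e^ε Φ(b)` that comes from differentiating the exponential; it is negative because the
Gaussian measure charges every half-line.
-/

open scoped NNReal

theorem hasDerivAt_setIntegral_Iic {E : Type*} [NormedAddCommGroup E] [NormedSpace ℝ E]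
    [CompleteSpace E] {f : ℝ → E} {x : ℝ} (hf : Integrable f) (hx : ContinuousAt f x) :
    HasDerivAt (fun y => ∫ t in Set.Iic y, f t) (f x) x := by
  have split_at_zero : (fun y => ∫ t in Set.Iic y, f t) =
      fun y => (∫ t in Set.Iic 0, f t) + ∫ t in (0 : ℝ)..y, f t := by
    funext y
    rw [← intervalIntegral.integral_Iic_sub_Iic hf.integrableOn hf.integrableOn,
      add_sub_cancel]
  rw [split_at_zero]
  exact (intervalIntegral.integral_hasDerivAt_right hf.intervalIntegrable
    hf.aestronglyMeasurable.stronglyMeasurableAtFilter hx).const_add _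

theorem cdf_pos (P : Measure ℝ) [IsProbabilityMeasure P] [P.IsOpenPosMeasure] (x : ℝ) :
    0 < cdf P x := by
  have measure_Iic_pos : 0 < P (Set.Iic x) :=
    Measure.measure_pos_of_nonempty_interior P (by simp)
  rw [cdf_eq_real]
  exact ENNReal.toReal_pos measure_Iic_pos.ne' (measure_ne_top P _)

section Gaussian

variable (m : ℝ) {v : ℝ≥0}

theorem continuous_gaussianPDFReal (v : ℝ≥0) : Continuous (gaussianPDFReal m v) := by
  unfold gaussianPDFReal
  fun_prop

theorem isOpenPosMeasure_gaussianReal (hv : v ≠ 0) : (gaussianReal m v).IsOpenPosMeasure :=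
  (gaussianReal_absolutelyContinuous' m hv).isOpenPosMeasure

theorem cdf_gaussianReal_eq_integral (hv : v ≠ 0) (x : ℝ) :
    cdf (gaussianReal m v) x = ∫ t in Set.Iic x, gaussianPDFReal m v t := by
  rw [cdf_eq_real, measureReal_def, gaussianReal_apply_eq_integral m hv,
    ENNReal.toReal_ofReal (integral_nonneg (gaussianPDFReal_nonneg m v))]

theorem hasDerivAt_cdf_gaussianReal (hv : v ≠ 0) (x : ℝ) :
    HasDerivAt (cdf (gaussianReal m v)) (gaussianPDFReal m v x) x := by
  rw [funext (cdf_gaussianReal_eq_integral m hv)]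
  exact hasDerivAt_setIntegral_Iic (integrable_gaussianPDFReal m v)
    (continuous_gaussianPDFReal m v).continuousAt

theorem gaussianPDFReal_add_eq_exp_mul_gaussianPDFReal_sub (v : ℝ≥0) (x h : ℝ) :
    gaussianPDFReal m v (x + h) =
      exp (2 * h * (m - x) / v) * gaussianPDFReal m v (x - h) := by
  simp only [gaussianPDFReal]
  rw [mul_left_comm, ← exp_add]
  congr 2
  ring

end Gaussian

theorem hasDerivAt_Phi (x : ℝ) : HasDerivAt Phi (gaussianPDFReal 0 1 x) x :=
  hasDerivAt_cdf_gaussianReal 0 one_ne_zero x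

theorem Phi_pos (x : ℝ) : 0 < Phi x :=
  have := isOpenPosMeasure_gaussianReal 0 one_ne_zero
  cdf_pos (gaussianReal 0 1) x

section DeltaGDP

variable {μ : ℝ}

theorem gaussianPDFReal_neg_div_add_half (hμ : μ ≠ 0) (ε : ℝ) :
    gaussianPDFReal 0 1 (-ε / μ + μ / 2) =
      exp ε * gaussianPDFReal 0 1 (-ε / μ - μ / 2) := by
  have exponent : 2 * (μ / 2) * (0 - -ε / μ) / ((1 : ℝ≥0) : ℝ) = ε := by
    push_cast
    field_simp
    ring
  rw [gaussianPDFReal_add_eq_exp_mul_gaussianPDFReal_sub, exponent]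

theorem hasDerivAt_deltaGDP (hμ : μ ≠ 0) (ε : ℝ) :
    HasDerivAt (deltaGDP μ) (-(exp ε * Phi (-ε / μ - μ / 2))) ε := by
  have hlin : HasDerivAt (fun e : ℝ => -e / μ) (-1 / μ) ε := (hasDerivAt_id ε).neg.div_const μ
  have hupper : HasDerivAt (fun e => Phi (-e / μ + μ / 2))
      (gaussianPDFReal 0 1 (-ε / μ + μ / 2) * (-1 / μ)) ε :=
    (hasDerivAt_Phi _).comp ε (hlin.add_const (μ / 2))
  have hlower : HasDerivAt (fun e => Phi (-e / μ - μ / 2))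
      (gaussianPDFReal 0 1 (-ε / μ - μ / 2) * (-1 / μ)) ε :=
    (hasDerivAt_Phi _).comp ε (hlin.sub_const (μ / 2))
  refine (hupper.sub ((hasDerivAt_exp ε).mul hlower)).congr_deriv ?_
  rw [gaussianPDFReal_neg_div_add_half hμ]
  ring

theorem strictAnti_deltaGDP (hμ : μ ≠ 0) : StrictAnti (deltaGDP μ) :=
  strictAnti_of_hasDerivAt_neg (hasDerivAt_deltaGDP hμ) fun ε =>
    neg_neg_of_pos (mul_pos (exp_pos ε) (Phi_pos _))

end DeltaGDP

/-- For fixed `μ > 0`, the function `ε ↦ δ_μ(ε)` is differentiable on `ℝ` with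
derivative `−e^ε·Φ(−ε/μ − μ/2)`; in particular it is strictly decreasing. -/
theorem stmt_5 (μ : ℝ) (hμ : 0 < μ) :
    (∀ ε : ℝ, HasDerivAt (fun ε => deltaGDP μ ε)
      (-(Real.exp ε * Phi (-ε / μ - μ / 2))) ε) ∧
    StrictAnti (fun ε => deltaGDP μ ε) :=
  ⟨hasDerivAt_deltaGDP hμ.ne', strictAnti_deltaGDP hμ.ne'⟩
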